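/- arXiv:1607.05342 — 6 statements merged into one kernel-verified Lean document; each statement's English description precedes it below -/
import Mathlib

section
/- Let ψ be a CNF formula with n variables and m clauses in which every clause consists of exactly 3 distinct literals (i.e., each C r : Finset (Fin n × Bool) has cardinality 3). Then there exist a matrix A : Fin (2m+n) → Fin (2n+2m) → ℕ all of whose entries lie in {0, 1} and a vector b : Fin (2m+n) → ℕ all of whose entries are at most 3, such that: (i) ψ is satisfiable if and only if there exists x : Fin (2n+2m) → ℕ with ∑_j A i j * x j = b i for every i; and (ii) every x : Fin (2n+2m) → ℕ satisfying ∑_j A i j * x j = b i for every i has all entries at most 2, i.e., x j ≤ 2 for every j. -/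
/-!
Represent each literal by an unknown in `ℕ`, the two unknowns of a variable summing to `1`; such
vectors are exactly the assignments. A clause of at most `w + 1` literals, `k` of which are true, is
satisfied iff `1 ≤ k`, that is, iff `k + s = w + 1` for a slack `s ≤ w`. The inequality `s ≤ w` is
in turn the equation `s + t = w` with a second slack `t`, which also bounds both slacks by `w`.
-/

open Matrix

section Literals

variable {V : Type*}

/-- The truth value, as a natural number, of each literal under the assignment `φ`; this is the part
of a solution of the linear system that encodes `φ`. -/
def literalValue (φ : V → Bool) (p : V × Bool) : ℕ :=
  if φ p.1 = p.2 then 1 else 0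

theorem sum_literalValue (φ : V → Bool) (c : Finset (V × Bool)) :
    ∑ p ∈ c, literalValue φ p = (c.filter fun p => φ p.1 = p.2).card :=
  (Finset.card_filter _ c).symm

theorem one_le_sum_literalValue_iff (φ : V → Bool) (c : Finset (V × Bool)) :
    1 ≤ ∑ p ∈ c, literalValue φ p ↔ ∃ p ∈ c, φ p.1 = p.2 := by
  rw [sum_literalValue, Finset.one_le_card, Finset.filter_nonempty_iff]

theorem sum_literalValue_le_card (φ : V → Bool) (c : Finset (V × Bool)) :
    ∑ p ∈ c, literalValue φ p ≤ c.card :=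
  (sum_literalValue φ c).trans_le (Finset.card_filter_le c _)

theorem exists_eq_literalValue_iff (l : V × Bool → ℕ) :
    (∃ φ, l = literalValue φ) ↔ ∀ i, l (i, true) + l (i, false) = 1 := by
  constructor
  · rintro ⟨φ, rfl⟩ i
    cases h : φ i <;> simp [literalValue, h]
  · intro hl
    refine ⟨fun i => decide (l (i, true) = 1), ?_⟩
    ext ⟨i, _ | _⟩ <;> grind [literalValue]

end Literals

theorem exists_slacks_iff {k w : ℕ} (hk : k ≤ w + 1) :
    (∃ s t, k + s = w + 1 ∧ s + t = w) ↔ 1 ≤ k := by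
  constructor
  · rintro ⟨s, t, hks, hst⟩
    omega
  · intro one_le
    exact ⟨w + 1 - k, k - 1, by omega, by omega⟩

section Reduction

variable {V K : Type*}

/-- The clause-literal incidence matrix of the CNF formula `C`. -/
def clauseIncidence [DecidableEq V] (C : K → Finset (V × Bool)) : Matrix K (V × Bool) ℕ :=
  of fun r p => if p ∈ C r then 1 else 0

/-- The variable-literal incidence matrix: row `i` selects the two literals of the variable `i`. -/
def variableIncidence (V : Type*) [DecidableEq V] : Matrix V (V × Bool) ℕ :=
  of fun i p => if p.1 = i then 1 else 0

/-- The coefficient matrix of the reduction from satisfiability of `C`. The columns are the literals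
followed by two slack unknowns `s r` and `t r` for each clause `r`. The three blocks of rows are the
left-hand sides of the equations `∑ p ∈ C r, l p + s r = w + 1`, `s r + t r = w` and
`l (i, true) + l (i, false) = 1`. -/
def reductionMatrix [DecidableEq V] [DecidableEq K] (C : K → Finset (V × Bool)) :
    Matrix (K ⊕ K ⊕ V) ((V × Bool) ⊕ K ⊕ K) ℕ :=
  fromRows (fromCols (clauseIncidence C) (fromCols 1 0))
    (fromRows (fromCols 0 (fromCols 1 1))
      (fromCols (variableIncidence V) 0))

/-- The right-hand side of the reduction for clauses of at most `w + 1` literals, with the rows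
ordered as in `reductionMatrix`. -/
def reductionTarget (V K : Type*) (w : ℕ) : K ⊕ K ⊕ V → ℕ :=
  Sum.elim (fun _ => w + 1) (Sum.elim (fun _ => w) fun _ => 1)

theorem reductionTarget_le (w : ℕ) (i : K ⊕ K ⊕ V) : reductionTarget V K w i ≤ w + 1 := by
  rcases i with _ | _ | _ <;> simp [reductionTarget]

variable [DecidableEq V]

theorem clauseIncidence_mulVec [Fintype V] (C : K → Finset (V × Bool)) (l : V × Bool → ℕ) (r : K) :
    (clauseIncidence C *ᵥ l) r = ∑ p ∈ C r, l p := by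
  simp [clauseIncidence, mulVec, dotProduct]

theorem variableIncidence_mulVec [Fintype V] (l : V × Bool → ℕ) (i : V) :
    (variableIncidence V *ᵥ l) i = l (i, true) + l (i, false) := by
  simp [variableIncidence, mulVec, dotProduct, Fintype.sum_prod_type, Finset.sum_add_distrib]

variable [DecidableEq K]

theorem reductionMatrix_le_one (C : K → Finset (V × Bool)) (i : K ⊕ K ⊕ V)
    (j : (V × Bool) ⊕ K ⊕ K) : reductionMatrix C i j ≤ 1 := by
  rcases i with r | r | i <;> rcases j with p | q | q <;>
    simp only [reductionMatrix, clauseIncidence, variableIncidence, fromRows_apply_inl,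
      fromRows_apply_inr, fromCols_apply_inl, fromCols_apply_inr, of_apply, one_apply,
      Matrix.zero_apply] <;> grind

variable [Fintype V] [Fintype K] {C : K → Finset (V × Bool)} {w : ℕ}
  {x : (V × Bool) ⊕ K ⊕ K → ℕ}

theorem reductionMatrix_mulVec_eq_iff :
    reductionMatrix C *ᵥ x = reductionTarget V K w ↔
      (∀ i, x (.inl (i, true)) + x (.inl (i, false)) = 1) ∧
        ∀ r, ∑ p ∈ C r, x (.inl p) + x (.inr (.inl r)) = w + 1 ∧
          x (.inr (.inl r)) + x (.inr (.inr r)) = w := by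
  simp only [reductionMatrix, reductionTarget, fromRows_mulVec, fromCols_mulVec, funext_iff,
    Sum.forall, Sum.elim_inl, Sum.elim_inr, Pi.add_apply, clauseIncidence_mulVec,
    variableIncidence_mulVec, one_mulVec, zero_mulVec, Function.comp_apply, add_zero,
    zero_add, forall_and]
  tauto

theorem exists_reductionMatrix_mulVec_eq_iff (hC : ∀ r, (C r).card ≤ w + 1) :
    (∃ x, reductionMatrix C *ᵥ x = reductionTarget V K w) ↔
      ∃ φ : V → Bool, ∀ r, ∃ p ∈ C r, φ p.1 = p.2 := by
  have slacks_iff (φ : V → Bool) (r : K) :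
      (∃ s t, ∑ p ∈ C r, literalValue φ p + s = w + 1 ∧ s + t = w) ↔ ∃ p ∈ C r, φ p.1 = p.2 :=
    (exists_slacks_iff ((sum_literalValue_le_card φ (C r)).trans (hC r))).trans
      (one_le_sum_literalValue_iff φ (C r))
  constructor
  · rintro ⟨x, hx⟩
    obtain ⟨hl, hst⟩ := reductionMatrix_mulVec_eq_iff.1 hx
    obtain ⟨φ, hφ⟩ := (exists_eq_literalValue_iff (x ∘ .inl)).2 hl
    refine ⟨φ, fun r => (slacks_iff φ r).1 ⟨x (.inr (.inl r)), x (.inr (.inr r)), ?_⟩⟩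
    simpa only [← hφ, Function.comp_apply] using hst r
  · rintro ⟨φ, hφ⟩
    choose s t hst using fun r => (slacks_iff φ r).2 (hφ r)
    have hl := (exists_eq_literalValue_iff (literalValue φ)).1 ⟨φ, rfl⟩
    exact ⟨Sum.elim (literalValue φ) (Sum.elim s t), reductionMatrix_mulVec_eq_iff.2 ⟨hl, hst⟩⟩

theorem le_max_of_reductionMatrix_mulVec_eq
    (hx : reductionMatrix C *ᵥ x = reductionTarget V K w) (j : (V × Bool) ⊕ K ⊕ K) :
    x j ≤ max w 1 := by
  obtain ⟨hl, hst⟩ := reductionMatrix_mulVec_eq_iff.1 hx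
  rcases j with ⟨i, _ | _⟩ | r | r
  · exact le_max_of_le_right (hl i ▸ Nat.le_add_left ..)
  · exact le_max_of_le_right (hl i ▸ Nat.le_add_right ..)
  · exact le_max_of_le_left ((hst r).2 ▸ Nat.le_add_right ..)
  · exact le_max_of_le_left ((hst r).2 ▸ Nat.le_add_left ..)

end Reduction

theorem submatrix_mulVec_eq_comp_iff {R R' J J' : Type*} [Fintype J] [Fintype J']
    {α : Type*} [NonUnitalNonAssocSemiring α]
    (A : Matrix R J α) (b : R → α) (e : R' ≃ R) (f : J' ≃ J) (x : J' → α) :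
    A.submatrix e f *ᵥ x = b ∘ e ↔ A *ᵥ (x ∘ f.symm) = b := by
  rw [submatrix_mulVec_equiv, e.surjective.injective_comp_right.eq_iff]

theorem statement2_general {V K R J : Type*} [Fintype V] [Fintype K] [Fintype R] [Fintype J]
    (hR : Fintype.card R = 2 * Fintype.card K + Fintype.card V)
    (hJ : Fintype.card J = 2 * Fintype.card V + 2 * Fintype.card K)
    (C : K → Finset (V × Bool)) (w : ℕ) (hC : ∀ r, (C r).card ≤ w + 1) :
    ∃ (A : Matrix R J ℕ) (b : R → ℕ),
      (∀ i j, A i j ≤ 1) ∧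
      (∀ i, b i ≤ w + 1) ∧
      ((∃ φ : V → Bool, ∀ r, ∃ p ∈ C r, φ p.1 = p.2) ↔ ∃ x, ∀ i, (A *ᵥ x) i = b i) ∧
      ∀ x, (∀ i, (A *ᵥ x) i = b i) → ∀ j, x j ≤ max w 1 := by
  classical
  let e : R ≃ K ⊕ K ⊕ V :=
    Fintype.equivOfCardEq (by simp only [hR, Fintype.card_sum]; ring)
  let f : J ≃ (V × Bool) ⊕ K ⊕ K :=
    Fintype.equivOfCardEq (by
      simp only [hJ, Fintype.card_sum, Fintype.card_prod, Fintype.card_bool]; ring)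
  refine ⟨(reductionMatrix C).submatrix e f, reductionTarget V K w ∘ e,
    fun i j => reductionMatrix_le_one C (e i) (f j), fun i => reductionTarget_le w (e i), ?_, ?_⟩
  · simp only [← funext_iff, submatrix_mulVec_eq_comp_iff,
      ← exists_reductionMatrix_mulVec_eq_iff hC]
    exact f.symm.injective.surjective_comp_right.exists
  · intro x hx j
    rw [← funext_iff, submatrix_mulVec_eq_comp_iff] at hx
    simpa using le_max_of_reductionMatrix_mulVec_eq hx (f j)

/-- the reduction for Theorem 1.1 / `thm:ETHIP`:
For a 3-CNF formula `C` with `n` variables and `m` clauses (each clause consisting of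
exactly 3 distinct literals), there is a 0/1 matrix `A` of dimension `(2m+n) × (2n+2m)`
and a target vector `b` with entries at most `3` such that the formula is satisfiable
iff `A x = b` has a non-negative integer solution, and moreover every non-negative
integer solution has all entries at most `2`. -/
theorem statement2 (n m : ℕ) (C : Fin m → Finset (Fin n × Bool))
    (h3 : ∀ r : Fin m, (C r).card = 3) :
    ∃ (A : Fin (2 * m + n) → Fin (2 * n + 2 * m) → ℕ) (b : Fin (2 * m + n) → ℕ),
      (∀ i j, A i j ≤ 1) ∧
      (∀ i, b i ≤ 3) ∧
      ((∃ φ : Fin n → Bool, ∀ r : Fin m, ∃ p ∈ C r, φ p.1 = p.2) ↔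
        (∃ x : Fin (2 * n + 2 * m) → ℕ,
          ∀ i, ∑ j : Fin (2 * n + 2 * m), A i j * x j = b i)) ∧
      (∀ x : Fin (2 * n + 2 * m) → ℕ,
        (∀ i, ∑ j : Fin (2 * n + 2 * m), A i j * x j = b i) → ∀ j, x j ≤ 2) := by
  exact statement2_general (by simp) (by simp) C 2 fun r => (h3 r).le
end

section
/- Let m, n, d be natural numbers, let A : Fin m → Fin n → ℕ be a matrix with A i j ≤ d for all i, j, and let X be a set of column indices of A (X ⊆ Fin n). Viewing the columns of A as vectors in Fin m → ℚ, let r(S) denote the ℚ-dimension (Module.finrank) of the span of the columns indexed by S, and set k = r(X) + r(Xᶜ) − r(Fin n) + 1 (this difference is a well-defined natural number since r(X) + r(Xᶜ) ≥ r(Fin n)). Then the set of vectors y : Fin m → ℕ satisfying y i ≤ d for all i and whose coercion to Fin m → ℚ lies in span(columns indexed by X) ⊓ span(columns indexed by Xᶜ) has cardinality at most (d+1)^{k−1}. -/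
/-!
A subspace `V` of dimension `t` in a coordinate space has `t` coordinates that determine each of
its vectors. They can be chosen greedily: while some nonzero vector of `V` vanishes on the chosen
coordinates, a further coordinate at which it is nonzero cuts down the dimension of the subspace
of such vectors.
Vectors of `V` over an alphabet of `q` letters are then determined by `t` letters, so there are at
most `q ^ t` of them. For `V = span(A|X) ⊓ span(A|Xᶜ)`, the modular law for dimensions gives
`t = r X + r Xᶜ - r univ`.
-/

section

open Module Submodule

variable {K M ι κ α : Type*} [DivisionRing K] [AddCommGroup M] [Module K M]

theorem exists_finset_card_le_finrank_disjoint_inf (U : ι → Submodule K M) (W : Submodule K M)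
    [FiniteDimensional K W] (hU : Disjoint W (⨅ i, U i)) :
    ∃ I : Finset ι, I.card ≤ finrank K W ∧ Disjoint W (I.inf U) := by
  classical
  induction hn : finrank K W using Nat.strong_induction_on generalizing W with
  | h n ih =>
    subst hn
    by_cases hW : ∀ i, W ≤ U i
    · have hbot : W = ⊥ := hU.eq_bot_of_le (le_iInf hW)
      exact ⟨∅, by simp, hbot ▸ disjoint_bot_left⟩
    · obtain ⟨i, hi⟩ := not_forall.mp hW
      have hlt : finrank K ↥(W ⊓ U i) < finrank K W :=
        finrank_lt_finrank_of_lt (inf_lt_left.mpr hi)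
      obtain ⟨I, hcard, hI⟩ := ih _ hlt (W ⊓ U i) (hU.mono_left inf_le_left) rfl
      refine ⟨insert i I, (Finset.card_insert_le i I).trans (hcard.trans_lt hlt), ?_⟩
      rwa [Finset.inf_insert, ← disjoint_assoc]

theorem exists_finset_card_eq_finrank_injOn_restrict (V : Submodule K (κ → K))
    [FiniteDimensional K V] :
    ∃ I : Finset κ, I.card = finrank K V ∧ Set.InjOn I.restrict (V : Set (κ → K)) := by
  obtain ⟨I, hcard, hI⟩ := exists_finset_card_le_finrank_disjoint_inf
    (fun i ↦ LinearMap.ker (LinearMap.proj i : (κ → K) →ₗ[K] K)) V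
    (by simp only [LinearMap.iInf_ker_proj, disjoint_bot_right])
  let restrictI : (κ → K) →ₗ[K] (I → K) := LinearMap.pi fun i ↦ LinearMap.proj i.1
  have hker : Disjoint V (LinearMap.ker restrictI) := by
    rwa [Finset.inf_eq_iInf, iInf_subtype', ← LinearMap.ker_pi] at hI
  have hinj : Set.InjOn restrictI (V : Set (κ → K)) :=
    LinearMap.injOn_of_disjoint_ker subset_rfl hker
  have hle : finrank K V ≤ I.card := by
    simpa using LinearMap.finrank_le_finrank_of_injective
      (f := restrictI.domRestrict V) (Set.injOn_iff_injective.mp hinj)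
  exact ⟨I, hcard.antisymm hle, hinj⟩

/-- Letters of `α` are read as scalars through `f`, for instance naturals through `Nat.cast`. -/
theorem encard_setOf_comp_mem_submodule_le {f : α → K} {s : Finset α} (hf : Set.InjOn f s)
    (V : Submodule K (κ → K)) [FiniteDimensional K V] :
    {y : κ → α | (∀ i, y i ∈ s) ∧ f ∘ y ∈ V}.encard ≤ (s.card ^ finrank K V : ℕ) := by
  classical
  obtain ⟨I, hcard, hI⟩ := exists_finset_card_eq_finrank_injOn_restrict V
  have hmaps : Set.MapsTo I.restrict {y : κ → α | (∀ i, y i ∈ s) ∧ f ∘ y ∈ V}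
      (Fintype.piFinset fun _ : I ↦ s) :=
    fun y hy ↦ Fintype.mem_piFinset.mpr fun i ↦ hy.1 i
  have hinj : Set.InjOn I.restrict {y : κ → α | (∀ i, y i ∈ s) ∧ f ∘ y ∈ V} := by
    rintro y ⟨hys, hyV⟩ z ⟨hzs, hzV⟩ hyz
    have hfyz : f ∘ y = f ∘ z := hI hyV hzV (congrArg (f ∘ ·) hyz)
    exact funext fun i ↦ hf (hys i) (hzs i) (congrFun hfyz i)
  calc {y : κ → α | (∀ i, y i ∈ s) ∧ f ∘ y ∈ V}.encard
      ≤ (Fintype.piFinset fun _ : I ↦ s : Set (I → α)).encard :=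
        Set.encard_le_encard_of_injOn hmaps hinj
    _ = (s.card ^ finrank K V : ℕ) := by
        rw [Set.encard_coe_eq_coe_finsetCard, Fintype.card_piFinset, Finset.prod_const,
          Finset.card_univ, Fintype.card_coe, hcard]

theorem finrank_span_image_inf_span_image_compl (v : ι → M)
    [FiniteDimensional K (span K (Set.range v))] (X : Set ι) :
    finrank K ↥(span K (v '' X) ⊓ span K (v '' Xᶜ)) =
      (v '' X).finrank K + (v '' Xᶜ).finrank K - (v '' Set.univ).finrank K := by
  have (S : Set ι) : FiniteDimensional K (span K (v '' S)) :=
    finiteDimensional_of_le (span_mono (Set.image_subset_range v S))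
  have hmod := finrank_sup_add_finrank_inf_eq (span K (v '' X)) (span K (v '' Xᶜ))
  rw [← span_union, ← Set.image_union, Set.union_compl_self] at hmod
  exact Nat.eq_sub_of_add_eq' hmod

theorem statement3_general {f : α → K} {s : Finset α} (hf : Set.InjOn f s) (v : ι → κ → K)
    [FiniteDimensional K (span K (Set.range v))] (X : Set ι) :
    {y : κ → α | (∀ i, y i ∈ s) ∧ f ∘ y ∈ span K (v '' X) ⊓ span K (v '' Xᶜ)}.encard ≤
      (s.card ^ ((v '' X).finrank K + (v '' Xᶜ).finrank K - (v '' Set.univ).finrank K) : ℕ) := by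
  have : FiniteDimensional K (span K (v '' X)) :=
    finiteDimensional_of_le (span_mono (Set.image_subset_range v X))
  rw [← finrank_span_image_inf_span_image_compl]
  exact encard_setOf_comp_mem_submodule_le hf _

end

/-- Cunningham–Geelen bound, Lemma 5.1 / `lemma:CGboundedpartialsoln`:
For a matrix `A` with entries in `{0,…,d}` and a set `X` of column indices, letting
`r S` be the ℚ-rank of the columns indexed by `S` and
`k = r X + r Xᶜ - r univ + 1` (the matroid connectivity `λ_{M(A)}(X)`), the number of
vectors `y ∈ {0,…,d}^m` lying in `span(A|X) ⊓ span(A|Xᶜ)` is at most `(d+1)^{k-1}`. -/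
theorem statement3 (m n d : ℕ) (A : Fin m → Fin n → ℕ)
    (hA : ∀ (i : Fin m) (j : Fin n), A i j ≤ d)
    (X : Set (Fin n))
    (r : Set (Fin n) → ℕ)
    (hr : ∀ S : Set (Fin n),
      r S = Module.finrank ℚ
        ↥(Submodule.span ℚ ((fun (j : Fin n) (i : Fin m) => (A i j : ℚ)) '' S)))
    (k : ℕ) (hk : k = r X + r Xᶜ - r Set.univ + 1) :
    Set.ncard {y : Fin m → ℕ | (∀ i, y i ≤ d) ∧
      (fun i => (y i : ℚ)) ∈
        Submodule.span ℚ ((fun (j : Fin n) (i : Fin m) => (A i j : ℚ)) '' X) ⊓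
        Submodule.span ℚ ((fun (j : Fin n) (i : Fin m) => (A i j : ℚ)) '' Xᶜ)}
      ≤ (d + 1) ^ (k - 1) := by
  simpa [hk, hr, Set.finrank, Set.ncard_def, Function.comp_def] using ENat.toNat_le_of_le_natCast <|
    statement3_general (s := Finset.Iic d) Nat.cast_injective.injOn (fun j i ↦ (A i j : ℚ)) X
end

section
/- Let m be a natural number and let V₁, V₂ be sets of vectors in Fin m → ℚ. Let I = {q : Fin m | (∃ v ∈ V₁, v q ≠ 0) ∧ (∃ w ∈ V₂, w q ≠ 0)} be the set of coordinates at which both some vector of V₁ and some vector of V₂ are nonzero. Then Module.finrank ℚ (span ℚ V₁ ⊓ span ℚ V₂) ≤ |I| (the cardinality of I as a finite set). -/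
/-!
A vector in both spans vanishes off the set of common nonzero coordinates, since each coordinate is
a linear functional. Restriction to these coordinates is therefore injective on the intersection.
-/

section

variable {ι : Type*}

theorem injOn_domRestrict_of_support_subset {α : Type*} [Zero α] {W : Set (ι → α)} {I : Set ι}
    (hW : ∀ x ∈ W, Function.support x ⊆ I) : Set.InjOn I.domRestrict W := by
  intro x hx y hy hxy
  ext q
  by_cases hq : q ∈ I
  · exact congrFun hxy ⟨q, hq⟩
  · rw [Function.notMem_support.mp fun h ↦ hq (hW x hx h),
      Function.notMem_support.mp fun h ↦ hq (hW y hy h)]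

variable {R : Type*} [Semiring R]

theorem exists_map_ne_zero_of_mem_span {M N : Type*} [AddCommMonoid M] [Module R M]
    [AddCommMonoid N] [Module R N] (f : M →ₗ[R] N) {s : Set M} {x : M}
    (hx : x ∈ Submodule.span R s) (hfx : f x ≠ 0) : ∃ v ∈ s, f v ≠ 0 := by
  contrapose! hfx
  exact LinearMap.eqOn_span (g := 0) hfx hx

variable [StrongRankCondition R]

theorem finrank_le_ncard_of_support_subset {W : Submodule R (ι → R)} {I : Set ι} (hI : I.Finite)
    (hW : ∀ x ∈ W, Function.support x ⊆ I) : Module.finrank R W ≤ I.ncard := by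
  have := hI.fintype
  calc
    Module.finrank R W ≤ Module.finrank R (I → R) :=
      LinearMap.finrank_le_finrank_of_injective
        (f := (LinearMap.funLeft R R ((↑) : I → ι)).domRestrict W)
        (injOn_domRestrict_of_support_subset hW).injective
    _ = I.ncard := by
      rw [Module.finrank_fintype_fun_eq_card, ← Nat.card_eq_fintype_card, Nat.card_coe_set_eq]

theorem statement5_general (V₁ V₂ : Set (ι → R))
    (hfin : {q : ι | (∃ v ∈ V₁, v q ≠ 0) ∧ (∃ w ∈ V₂, w q ≠ 0)}.Finite) :
    Module.finrank R ↥(Submodule.span R V₁ ⊓ Submodule.span R V₂) ≤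
      Set.ncard {q : ι | (∃ v ∈ V₁, v q ≠ 0) ∧ (∃ w ∈ V₂, w q ≠ 0)} :=
  finrank_le_ncard_of_support_subset hfin fun _ ⟨hx₁, hx₂⟩ q hq ↦
    ⟨exists_map_ne_zero_of_mem_span (LinearMap.proj q) hx₁ hq,
      exists_map_ne_zero_of_mem_span (LinearMap.proj q) hx₂ hq⟩

end

/-- key linear-algebraic observation used to bound path-width:
For sets of vectors `V₁, V₂ ⊆ ℚ^m`, the dimension of `span V₁ ⊓ span V₂` is at most
the number of coordinates at which both some vector of `V₁` and some vector of `V₂`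
are nonzero. -/
theorem statement5 (m : ℕ) (V₁ V₂ : Set (Fin m → ℚ)) :
    Module.finrank ℚ ↥(Submodule.span ℚ V₁ ⊓ Submodule.span ℚ V₂) ≤
      Set.ncard {q : Fin m | (∃ v ∈ V₁, v q ≠ 0) ∧ (∃ w ∈ V₂, w q ≠ 0)} :=
  statement5_general V₁ V₂ (Set.toFinite _)
end

section
/- Let A : Fin m → Fin n → ℕ be a matrix with non-negative integer entries and columns w₁, …, w_n : Fin m → ℕ, let b : Fin m → ℕ, and set w_{n+1} = b (so w₁, …, w_{n+1} are the columns of A' = [A | b]). For X ⊆ Fin (n+1) define 𝓑(X) to be the set of y : Fin m → ℕ such that (1) y i ≤ b i for every i, (2) there exists z : Fin (n+1) → ℕ with z t = 0 for all t ∉ X and y = ∑_t z t • w_t, and (3) the coercion of y to Fin m → ℚ lies in span ℚ {w_t : t ∈ X} ⊓ span ℚ {w_t : t ∉ X}. Then for every j with 2 ≤ j ≤ n and every y : Fin m → ℕ: y ∈ 𝓑({1, …, j}) if and only if (a) there exist y₁ ∈ 𝓑({1, …, j−1}) and y₂ ∈ 𝓑({j}) with y = y₁ + y₂, (b) y i ≤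 b i for every i, and (c) the coercion of y lies in span ℚ {w₁, …, w_j} ⊓ span ℚ {w_{j+1}, …, w_{n+1}}. -/
/-- The table of partial solutions `𝓑(X)` of the dynamic programming algorithm for the
instance `A x = b, x ≥ 0`: given the columns `w₁, …, w_{n+1}` of `A' = [A | b]` and a set
`X ⊆ Fin (n+1)` of column indices, `partialSolutions m n b w X` is the set of vectors
`y : Fin m → ℕ` such that (1) `y ≤ b` coordinatewise, (2) `y` is a non-negative integer
combination of the columns indexed by `X`, and (3) the coercion of `y` to ℚ lies in
`span {w_t : t ∈ X} ⊓ span {w_t : t ∉ X}`. -/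
def partialSolutions (m n : ℕ) (b : Fin m → ℕ) (w : Fin (n + 1) → Fin m → ℕ)
    (X : Set (Fin (n + 1))) : Set (Fin m → ℕ) :=
  {y | (∀ i, y i ≤ b i) ∧
    (∃ z : Fin (n + 1) → ℕ, (∀ t, t ∉ X → z t = 0) ∧ y = ∑ t, z t • w t) ∧
    (fun i => (y i : ℚ)) ∈
      Submodule.span ℚ ((fun (t : Fin (n + 1)) (i : Fin m) => (w t i : ℚ)) '' X) ⊓
      Submodule.span ℚ ((fun (t : Fin (n + 1)) (i : Fin m) => (w t i : ℚ)) '' Xᶜ)}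

/-!
Split a non-negative combination over disjoint index sets `X` and `Y` as `y = y₁ + y₂`. The span
of the columns outside `X` contains `y`, which even lies in the span of the columns outside `X ∪ Y`,
and it contains `y₂`, a combination of the columns in `Y`; hence it contains the difference `y₁`.
The argument for `y₂` is symmetric, and the bound by `b` passes to the summands because they are
non-negative.
-/

section Span

variable {ι κ : Type*}

theorem mem_span_image_iff_exists_eq_sum {R M : Type*} [Semiring R] [AddCommMonoid M] [Module R M]
    [Fintype ι] {v : ι → M} {X : Set ι} {x : M} :
    x ∈ Submodule.span R (v '' X) ↔
      ∃ c : ι → R, (∀ t, t ∉ X → c t = 0) ∧ x = ∑ t, c t • v t := by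
  rw [Finsupp.mem_span_image_iff_linearCombination]
  refine Finsupp.equivFunOnFinite.exists_congr fun c => and_congr (Finsupp.mem_supported' R c) ?_
  rw [Finsupp.linearCombination_apply, Finsupp.sum_fintype _ _ fun t => zero_smul R (v t), eq_comm]
  rfl

theorem natCast_mem_span_image {R : Type*} [Semiring R] {w : ι → κ → ℕ} {X : Set ι} {y : κ → ℕ}
    (hy : y ∈ Submodule.span ℕ (w '' X)) :
    (fun i => (y i : R)) ∈ Submodule.span R ((fun t i => (w t i : R)) '' X) := by
  let cast : (κ → ℕ) →ₗ[ℕ] κ → R := ((Nat.castAddMonoidHom R).compLeft κ).toNatLinearMap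
  have hcast : cast y ∈ Submodule.span ℕ ((fun t i => (w t i : R)) '' X) := by
    have hmap := Submodule.mem_map_of_mem (f := cast) hy
    rwa [Submodule.map_span, Set.image_image] at hmap
  exact Submodule.span_le_restrictScalars ℕ R _ hcast

end Span

section PartialSolutions

variable {m n : ℕ} {b : Fin m → ℕ} {w : Fin (n + 1) → Fin m → ℕ} {X Y : Set (Fin (n + 1))}
  {y y₁ y₂ : Fin m → ℕ}

theorem mem_partialSolutions_iff :
    y ∈ partialSolutions m n b w X ↔
      y ≤ b ∧ y ∈ Submodule.span ℕ (w '' X) ∧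
        (fun i => (y i : ℚ)) ∈ Submodule.span ℚ ((fun t i => (w t i : ℚ)) '' Xᶜ) := by
  rw [mem_span_image_iff_exists_eq_sum]
  refine and_congr_right fun _ => and_congr_right fun hz => and_iff_right ?_
  exact natCast_mem_span_image (mem_span_image_iff_exists_eq_sum.mpr hz)

theorem left_mem_partialSolutions_of_add_mem (hXY : Disjoint X Y)
    (hy₁ : y₁ ∈ Submodule.span ℕ (w '' X)) (hy₂ : y₂ ∈ Submodule.span ℕ (w '' Y))
    (hy : y₁ + y₂ ∈ partialSolutions m n b w (X ∪ Y)) :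
    y₁ ∈ partialSolutions m n b w X := by
  obtain ⟨hb, -, hspan⟩ := mem_partialSolutions_iff.mp hy
  refine mem_partialSolutions_iff.mpr ⟨le_self_add.trans hb, hy₁, ?_⟩
  have hsum : (fun i => ((y₁ + y₂) i : ℚ)) ∈
      Submodule.span ℚ ((fun t i => (w t i : ℚ)) '' Xᶜ) :=
    Submodule.span_mono (Set.image_mono (Set.compl_subset_compl.mpr Set.subset_union_left)) hspan
  have hright : (fun i => (y₂ i : ℚ)) ∈ Submodule.span ℚ ((fun t i => (w t i : ℚ)) '' Xᶜ) :=
    Submodule.span_mono (Set.image_mono hXY.subset_compl_left) (natCast_mem_span_image hy₂)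
  convert Submodule.sub_mem _ hsum hright using 1
  ext i
  simp

theorem exists_add_of_mem_partialSolutions_union (hXY : Disjoint X Y)
    (hy : y ∈ partialSolutions m n b w (X ∪ Y)) :
    ∃ y₁ ∈ partialSolutions m n b w X, ∃ y₂ ∈ partialSolutions m n b w Y, y = y₁ + y₂ := by
  have hcomb := (mem_partialSolutions_iff.mp hy).2.1
  rw [Set.image_union, Submodule.span_union] at hcomb
  obtain ⟨y₁, hy₁, y₂, hy₂, rfl⟩ := Submodule.mem_sup.mp hcomb
  refine ⟨y₁, left_mem_partialSolutions_of_add_mem hXY hy₁ hy₂ hy, y₂, ?_, rfl⟩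
  rw [add_comm y₁, Set.union_comm] at hy
  exact left_mem_partialSolutions_of_add_mem hXY.symm hy₂ hy₁ hy

end PartialSolutions

theorem statement7_general (m n : ℕ) (b : Fin m → ℕ) (w : Fin (n + 1) → Fin m → ℕ)
    (X Y : Set (Fin (n + 1))) (hXY : Disjoint X Y) (y : Fin m → ℕ) :
    y ∈ partialSolutions m n b w (X ∪ Y) ↔
      (∃ y₁ ∈ partialSolutions m n b w X, ∃ y₂ ∈ partialSolutions m n b w Y, y = y₁ + y₂) ∧
        (∀ i, y i ≤ b i) ∧
        (fun i => (y i : ℚ)) ∈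
          Submodule.span ℚ ((fun t i => (w t i : ℚ)) '' (X ∪ Y)) ⊓
          Submodule.span ℚ ((fun t i => (w t i : ℚ)) '' (X ∪ Y)ᶜ) := by
  constructor
  · intro hy
    exact ⟨exists_add_of_mem_partialSolutions_union hXY hy, hy.1, hy.2.2⟩
  · rintro ⟨⟨y₁, hy₁, y₂, hy₂, rfl⟩, hb, hspan⟩
    have hcomb : y₁ + y₂ ∈ Submodule.span ℕ (w '' (X ∪ Y)) := by
      rw [Set.image_union, Submodule.span_union]
      exact Submodule.add_mem_sup (mem_partialSolutions_iff.mp hy₁).2.1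
        (mem_partialSolutions_iff.mp hy₂).2.1
    exact mem_partialSolutions_iff.mpr ⟨hb, hcomb, hspan.2⟩

theorem setOf_val_lt_eq_union {k j : ℕ} (hj : 0 < j) :
    {t : Fin k | (t : ℕ) < j} = {t : Fin k | (t : ℕ) < j - 1} ∪ {t : Fin k | (t : ℕ) = j - 1} := by
  ext t
  simp only [Set.mem_union, Set.mem_ofPred_eq]
  omega

theorem disjoint_setOf_val_lt_setOf_val_eq (k j : ℕ) :
    Disjoint {t : Fin k | (t : ℕ) < j} {t : Fin k | (t : ℕ) = j} :=
  Set.disjoint_left.mpr fun _ hlt heq => hlt.ne heq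

/-- correctness of the dynamic-programming recurrence in the proof of
Theorem 1.3 / `thmCGlin`: with `w₁, …, w_n` the columns of the non-negative matrix `A`
and `w_{n+1} = b`, for every `2 ≤ j ≤ n`, a vector `y` belongs to `𝓑({1,…,j})` iff
(a) `y = y₁ + y₂` for some `y₁ ∈ 𝓑({1,…,j-1})` and `y₂ ∈ 𝓑({j})`, (b) `y ≤ b`, and
(c) the coercion of `y` lies in `span {w₁,…,w_j} ⊓ span {w_{j+1},…,w_{n+1}}`. -/
theorem statement7 (m n : ℕ) (A : Fin m → Fin n → ℕ) (b : Fin m → ℕ)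
    (w : Fin (n + 1) → Fin m → ℕ)
    (hwA : ∀ (j : Fin n) (i : Fin m), w j.castSucc i = A i j)
    (hwb : w (Fin.last n) = b) :
    ∀ j : ℕ, 2 ≤ j → j ≤ n → ∀ y : Fin m → ℕ,
      y ∈ partialSolutions m n b w {t : Fin (n + 1) | (t : ℕ) < j} ↔
        ((∃ y₁ ∈ partialSolutions m n b w {t : Fin (n + 1) | (t : ℕ) < j - 1},
            ∃ y₂ ∈ partialSolutions m n b w {t : Fin (n + 1) | (t : ℕ) = j - 1},
              y = y₁ + y₂) ∧
          (∀ i, y i ≤ b i) ∧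
          (fun i => (y i : ℚ)) ∈
            Submodule.span ℚ
              ((fun (t : Fin (n + 1)) (i : Fin m) => (w t i : ℚ)) ''
                {t : Fin (n + 1) | (t : ℕ) < j}) ⊓
            Submodule.span ℚ
              ((fun (t : Fin (n + 1)) (i : Fin m) => (w t i : ℚ)) ''
                {t : Fin (n + 1) | j ≤ (t : ℕ)})) := by
  intro j hj _ y
  have hcompl : {t : Fin (n + 1) | j ≤ (t : ℕ)} = {t : Fin (n + 1) | (t : ℕ) < j}ᶜ := by
    simp only [Set.compl_ofPred, not_lt]
  rw [hcompl, setOf_val_lt_eq_union (by omega : 0 < j)]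
  exact statement7_general m n b w _ _ (disjoint_setOf_val_lt_setOf_val_eq (n + 1) (j - 1)) y
end

section
/- Let d ≥ 1 and k ≥ 1, let A : Fin m → Fin n → ℕ be a matrix with all entries at most d and columns w₁, …, w_n, and let b : Fin m → ℕ with all entries at most d; set w_{n+1} = b. Suppose that for every i with 1 ≤ i ≤ n−1, Module.finrank ℚ (span ℚ {w₁, …, w_i} ⊓ span ℚ {w_{i+1}, …, w_n}) ≤ k − 1 (columns regarded as vectors in Fin m → ℚ). For X ⊆ Fin (n+1) let 𝓑(X) be the set of y : Fin m → ℕ such that y i ≤ b i for every i, y = ∑_t z t • w_t for some z : Fin (n+1) → ℕ vanishing outside X, and the coercion of y lies in span ℚ {w_t : t ∈ X} ⊓ span ℚ {w_t : t ∉ X}. Then for every j with 1 ≤ j ≤ n, the set 𝓑({1, …, j}) has cardinality at most (d+1)^k. -/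
/-!
A subspace `W` of `K^ι` of dimension `r` is determined by `r` well-chosen coordinates, because the
coordinate functionals span the dual of `W`. Hence at most `|F|^r` of its vectors have all their
entries in `F`. Partial solutions have entries in `{0, …, d}` and lie in the intersection of the
spans of the two sides of a cut of `[A | b]`; compared with the corresponding cut of `A`, one side
gains the single vector `b`, which raises the dimension from at most `k - 1` to at most `k`.
-/

open Module Set Submodule

section SubspaceOfPi

variable {ι K : Type*} [Field K] (W : Submodule K (ι → K)) [FiniteDimensional K W]

theorem exists_injOn_comp_fin_finrank :
    ∃ a : Fin (finrank K W) → ι, InjOn (fun v : ι → K ↦ v ∘ a) W := by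
  let coord (i : ι) : Dual K W := LinearMap.proj i ∘ₗ W.subtype
  have span_coord : span K (range coord) = ⊤ := by
    refine span_eq_top_of_ne_zero fun v hv ↦ ?_
    obtain ⟨i, hi⟩ := Function.ne_iff.mp (Subtype.coe_ne_coe.mpr hv)
    exact ⟨coord i, mem_range_self i, hi⟩
  have rank_coord : finrank K (span K (range coord)) = finrank K W := by
    rw [span_coord, finrank_top, Subspace.dual_finrank_eq]
  obtain ⟨f, f_mem, span_f, -⟩ := exists_fun_fin_finrank_span_eq K (range coord)
  choose a coord_a using f_mem
  rw [← rank_coord]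
  refine ⟨a, fun v hv v' hv' hvv' ↦ ?_⟩
  have eval_eq : Dual.eval K W ⟨v, hv⟩ = Dual.eval K W ⟨v', hv'⟩ :=
    LinearMap.ext_on_range (span_f.trans span_coord) fun c ↦ by
      rw [← coord_a c]
      exact congrFun hvv' c
  exact funext fun i ↦ DFunLike.congr_fun eval_eq (coord i)

theorem encard_inter_pi_le (F : Set K) :
    ((W : Set (ι → K)) ∩ univ.pi fun _ ↦ F).encard ≤ F.encard ^ finrank K W := by
  obtain ⟨a, ha⟩ := exists_injOn_comp_fin_finrank W
  calc ((W : Set (ι → K)) ∩ univ.pi fun _ ↦ F).encard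
      ≤ (univ.pi fun _ : Fin (finrank K W) ↦ F).encard :=
        encard_le_encard_of_injOn (fun _ hv c _ ↦ hv.2 (a c) trivial) (ha.mono inter_subset_left)
    _ = F.encard ^ finrank K W := by simp [encard_pi_eq_prod_encard]

end SubspaceOfPi

theorem finrank_inf_sup_le {K M : Type*} [DivisionRing K] [AddCommGroup M] [Module K M]
    (U V L : Submodule K M) [FiniteDimensional K V] [FiniteDimensional K L] :
    finrank K ↥(U ⊓ (V ⊔ L)) ≤ finrank K ↥(U ⊓ V) + finrank K L := by
  have modular := finrank_sup_add_finrank_inf_eq (U ⊓ (V ⊔ L)) V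
  have finrank_sup_le : finrank K ↥(U ⊓ (V ⊔ L) ⊔ V) ≤ finrank K V + finrank K L :=
    (Submodule.finrank_mono (sup_le inf_le_right le_sup_left)).trans
      (finrank_add_le_finrank_add_finrank V L)
  rw [inf_assoc, inf_eq_right.mpr (le_sup_left : V ≤ V ⊔ L)] at modular
  lia

section ColumnSpan

variable {ι κ : Type*}

/-- The rational span of the columns `w t` with `t ∈ X`, of a matrix with natural number entries
whose columns are indexed by `ι` and whose rows are indexed by `κ`. -/
abbrev columnSpan (w : ι → κ → ℕ) (X : Set ι) : Submodule ℚ (κ → ℚ) :=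
  span ℚ ((fun t i ↦ (w t i : ℚ)) '' X)

theorem finrank_inf_columnSpan_le_sdiff_singleton_add_one [Finite κ] (w : ι → κ → ℕ)
    (U : Submodule ℚ (κ → ℚ)) (Y : Set ι) (x : ι) :
    finrank ℚ ↥(U ⊓ columnSpan w Y) ≤ finrank ℚ ↥(U ⊓ columnSpan w (Y \ {x})) + 1 := by
  have columnSpan_le : columnSpan w Y ≤ columnSpan w (Y \ {x}) ⊔ columnSpan w {x} := by
    rw [← span_union, ← image_union, sdiff_union_self]
    exact span_mono (image_mono subset_union_left)
  calc finrank ℚ ↥(U ⊓ columnSpan w Y)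
      ≤ finrank ℚ ↥(U ⊓ (columnSpan w (Y \ {x}) ⊔ columnSpan w {x})) :=
        Submodule.finrank_mono (inf_le_inf_left U columnSpan_le)
    _ ≤ finrank ℚ ↥(U ⊓ columnSpan w (Y \ {x})) + finrank ℚ (columnSpan w {x}) :=
        finrank_inf_sup_le ..
    _ ≤ finrank ℚ ↥(U ⊓ columnSpan w (Y \ {x})) + 1 := by
        gcongr
        rw [columnSpan, image_singleton]
        exact (finrank_span_le_card _).trans_eq (by simp)

theorem finrank_prefix_cut_le {n r : ℕ} (w : Fin (n + 1) → κ → ℕ)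
    (hcut : ∀ i : ℕ, 1 ≤ i → i ≤ n - 1 →
      finrank ℚ ↥(columnSpan w {t | (t : ℕ) < i} ⊓
        columnSpan w {t | i ≤ (t : ℕ) ∧ (t : ℕ) < n}) ≤ r) {j : ℕ} (hj : 1 ≤ j) :
    finrank ℚ ↥(columnSpan w {t | (t : ℕ) < j} ⊓
      columnSpan w ({t | (t : ℕ) < j}ᶜ \ {Fin.last n})) ≤ r := by
  have compl_sdiff_last : ({t | (t : ℕ) < j}ᶜ \ {Fin.last n} : Set (Fin (n + 1))) =
      {t : Fin (n + 1) | j ≤ (t : ℕ) ∧ (t : ℕ) < n} := by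
    ext t : 1
    simp only [mem_sdiff, mem_compl_iff, mem_ofPred_eq, mem_singleton_iff, Fin.ext_iff,
      Fin.val_last]
    lia
  rw [compl_sdiff_last]
  by_cases hjn : j ≤ n - 1
  · exact hcut j hj hjn
  · have right_empty : {t : Fin (n + 1) | j ≤ (t : ℕ) ∧ (t : ℕ) < n} = ∅ :=
      eq_empty_of_forall_notMem fun t ⟨hjt, htn⟩ ↦ by lia
    have right_span : columnSpan w {t : Fin (n + 1) | j ≤ (t : ℕ) ∧ (t : ℕ) < n} = ⊥ := by
      rw [columnSpan, right_empty, image_empty, span_empty]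
    rw [right_span, inf_bot_eq, finrank_bot]
    exact Nat.zero_le r

end ColumnSpan

theorem encard_partialSolutions_le {m n d : ℕ} {b : Fin m → ℕ} (hb : ∀ i, b i ≤ d)
    (w : Fin (n + 1) → Fin m → ℕ) (X : Set (Fin (n + 1))) :
    (partialSolutions m n b w X).encard ≤
      (d + 1) ^ finrank ℚ ↥(columnSpan w X ⊓ columnSpan w Xᶜ) := by
  let W := columnSpan w X ⊓ columnSpan w Xᶜ
  let F : Set ℚ := (↑) '' Iic d
  have cast_injective : Function.Injective fun (y : Fin m → ℕ) i ↦ (y i : ℚ) :=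
    Nat.cast_injective.comp_left
  calc (partialSolutions m n b w X).encard
      ≤ ((W : Set (Fin m → ℚ)) ∩ univ.pi fun _ ↦ F).encard :=
        encard_le_encard_of_injOn
          (fun y ⟨hyb, _, hyW⟩ ↦ ⟨hyW, fun i _ ↦ mem_image_of_mem _ ((hyb i).trans (hb i))⟩)
          cast_injective.injOn
    _ ≤ F.encard ^ finrank ℚ W := encard_inter_pi_le W F
    _ = (d + 1) ^ finrank ℚ W := by
        rw [Nat.cast_injective.encard_image, ← Finset.coe_Iic, encard_coe_eq_coe_finsetCard,
          Nat.card_Iic, Nat.cast_add, Nat.cast_one]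

/-- Deleting the column `x` plays the role of passing from `[A | b]` to `A`. -/
theorem statement8_general {m n d r : ℕ} {b : Fin m → ℕ} (hb : ∀ i, b i ≤ d)
    (w : Fin (n + 1) → Fin m → ℕ) (X : Set (Fin (n + 1))) (x : Fin (n + 1))
    (hcut : finrank ℚ ↥(columnSpan w X ⊓ columnSpan w (Xᶜ \ {x})) ≤ r) :
    (partialSolutions m n b w X).encard ≤ (d + 1) ^ (r + 1) :=
  (encard_partialSolutions_le hb w X).trans <| pow_le_pow_right₀ le_add_self <|
    (finrank_inf_columnSpan_le_sdiff_singleton_add_one ..).trans (by gcongr)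

/-- size bound on the dynamic-programming tables in the proof of
Theorem 1.3 / `thmCGlin`: if all entries of `A` and of `b` are at most `d`, and the
identity ordering of the columns `w₁, …, w_n` of `A` witnesses that the path-width of
the column matroid of `A` is at most `k` (every ordered cut has intersection dimension
at most `k - 1`), then each table `𝓑({1,…,j})`, `1 ≤ j ≤ n`, has at most `(d+1)^k`
elements. -/
theorem statement8 (m n d k : ℕ) (hd : 1 ≤ d) (hk : 1 ≤ k)
    (A : Fin m → Fin n → ℕ) (hA : ∀ (i : Fin m) (j : Fin n), A i j ≤ d)
    (b : Fin m → ℕ) (hb : ∀ i, b i ≤ d)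
    (w : Fin (n + 1) → Fin m → ℕ)
    (hwA : ∀ (j : Fin n) (i : Fin m), w j.castSucc i = A i j)
    (hwb : w (Fin.last n) = b)
    (hcut : ∀ i : ℕ, 1 ≤ i → i ≤ n - 1 →
      Module.finrank ℚ
        ↥(Submodule.span ℚ
            ((fun (t : Fin (n + 1)) (i' : Fin m) => (w t i' : ℚ)) ''
              {t : Fin (n + 1) | (t : ℕ) < i}) ⊓
          Submodule.span ℚ
            ((fun (t : Fin (n + 1)) (i' : Fin m) => (w t i' : ℚ)) ''
              {t : Fin (n + 1) | i ≤ (t : ℕ) ∧ (t : ℕ) < n})) ≤ k - 1) :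
    ∀ j : ℕ, 1 ≤ j → j ≤ n →
      Set.ncard (partialSolutions m n b w {t : Fin (n + 1) | (t : ℕ) < j})
        ≤ (d + 1) ^ k := by
  intro j hj _
  exact ENat.toNat_le_of_le_natCast <| mod_cast Nat.sub_add_cancel hk ▸
    statement8_general hb w _ (Fin.last n) (finrank_prefix_cut_le w hcut hj)
end

section
/- Let d be a natural number, let A : Fin m → Fin n → ℕ have columns w₁, …, w_n, and let b : Fin m → ℕ with all entries at most d; set w_{n+1} = b. For X ⊆ Fin (n+1) let 𝓑(X) be the set of y : Fin m → ℕ such that y i ≤ b i for every i, y = ∑_t z t • w_t for some z : Fin (n+1) → ℕ vanishing outside X, and the coercion of y lies in span ℚ {w_t : t ∈ X} ⊓ span ℚ {w_t : t ∉ X}. Then for every t : Fin (n+1), 𝓑({t}) ⊆ {a • w_t : a ∈ ℕ, a ≤ d}, and consequently 𝓑({t}) has cardinality at most d + 1. -/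
/-- The multiplier itself need not be at most `d`: it is unconstrained when `v = 0`. -/
theorem exists_le_nsmul_eq_of_nsmul_le {ι : Type*} {v : ι → ℕ} {a d : ℕ}
    (h : ∀ i, (a • v) i ≤ d) : ∃ a' ≤ d, a' • v = a • v := by
  obtain rfl | hv := eq_or_ne v 0
  · exact ⟨0, Nat.zero_le d, by rw [smul_zero, smul_zero]⟩
  · obtain ⟨i, hi⟩ := Function.ne_iff.mp hv
    have ha : a ≤ d := calc
      a ≤ a * v i := Nat.le_mul_of_pos_right a (Nat.pos_of_ne_zero hi)
      _ ≤ d := h i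
    exact ⟨a, ha, rfl⟩

theorem ncard_image_Iic_nat_le {α : Type*} (f : ℕ → α) (d : ℕ) :
    (f '' Set.Iic d).ncard ≤ d + 1 := calc
  (f '' Set.Iic d).ncard ≤ (Set.Iic d).ncard := Set.ncard_image_le (Set.finite_Iic d)
  _ = d + 1 := by rw [← Finset.coe_Iic, Set.ncard_coe_finset, Nat.card_Iic]

section SingletonTable

variable {m n : ℕ} {b : Fin m → ℕ} {w : Fin (n + 1) → Fin m → ℕ} {t : Fin (n + 1)}

theorem exists_nsmul_eq_of_mem_partialSolutions_singleton {y : Fin m → ℕ}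
    (hy : y ∈ partialSolutions m n b w {t}) : ∃ a : ℕ, a • w t = y := by
  obtain ⟨-, ⟨z, hz, rfl⟩, -⟩ := hy
  have hsum : ∑ s, z s • w s = z t • w t :=
    Fintype.sum_eq_single t fun s hs => by rw [hz s hs, zero_smul]
  exact ⟨z t, hsum.symm⟩

theorem partialSolutions_singleton_subset_image_Iic {d : ℕ} (hb : ∀ i, b i ≤ d) :
    partialSolutions m n b w {t} ⊆ (fun a : ℕ => a • w t) '' Set.Iic d := by
  intro y hy
  obtain ⟨a, rfl⟩ := exists_nsmul_eq_of_mem_partialSolutions_singleton hy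
  exact exists_le_nsmul_eq_of_nsmul_le fun i => (hy.1 i).trans (hb i)

end SingletonTable

/-- initialization of the dynamic programming in the proof of
Theorem 1.3 / `thmCGlin`: if all entries of `b` are at most `d`, then for every column
index `t` of `A' = [A | b]`, the singleton table `𝓑({t})` is contained in the set of
multiples `a • w_t` with `a ≤ d`, and consequently has at most `d + 1` elements. -/
theorem statement9 (m n d : ℕ) (A : Fin m → Fin n → ℕ)
    (b : Fin m → ℕ) (hb : ∀ i, b i ≤ d)
    (w : Fin (n + 1) → Fin m → ℕ)
    (hwA : ∀ (j : Fin n) (i : Fin m), w j.castSucc i = A i j)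
    (hwb : w (Fin.last n) = b) :
    ∀ t : Fin (n + 1),
      partialSolutions m n b w {t} ⊆ {y : Fin m → ℕ | ∃ a : ℕ, a ≤ d ∧ y = a • w t} ∧
      Set.ncard (partialSolutions m n b w {t}) ≤ d + 1 := by
  intro t
  have hsub := partialSolutions_singleton_subset_image_Iic (w := w) (t := t) hb
  refine ⟨fun y hy => ?_, ?_⟩
  · obtain ⟨a, ha, rfl⟩ := hsub hy
    exact ⟨a, ha, rfl⟩
  · exact (Set.ncard_le_ncard hsub ((Set.finite_Iic d).image _)).trans
      (ncard_image_Iic_nat_le _ d)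
end
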